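/- Let 2 ≤ k₁ ≤ k₂ ≤ k₃ ≤ ⋯ be a nondecreasing sequence of positive integers. Then for any finite coloring of ℕ there exist positive integers d₁, d₂, d₃, … and a color γ such that for every n ∈ ℕ there exists a positive integer aₙ such that the set {aₙ + j₁d₁ + ⋯ + jₙdₙ | 0 ≤ j₁ ≤ k₁ − 1, …, 0 ≤ jₙ ≤ kₙ − 1} as well as the set {d₁, d₂, d₃, …} are all monochromatic with the color γ. -/

import Mathlib

/-!
Call `B` piecewise syndetic if finitely many of its translates cover a thick set. Some color class
`A` of a thick set `T` is both piecewise syndetic and contains all finite sums of a sequence `x`: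
removing the color classes that are not piecewise syndetic leaves a thick set, which contains the
finite sums of a sequence, and Hindman's theorem applies to these.

If `B` is piecewise syndetic, then so is `{b | ∀ j ≤ m, b + j • d ∈ B}` for some `d ∈ FS x`: color a
point of the covered thick set by a translate covering it. The Hales–Jewett theorem finds
monochromatic progressions of length `m + 1` with difference in `FS x` inside all translates of one
fixed finite set, and only finitely many differences occur. Iterating this from `B = A` yields
`d₁, d₂, …` in `FS x ⊆ A` for which the base points of boxes inside `A` form a piecewise syndetic,
hence nonempty, set.
-/

open Combinatorics Hindman
open scoped Pointwise

section Thick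

variable {M : Type*}

/-- A subset of an additive structure is thick if it contains a translate of every finite set;
in `ℕ` this says that it contains arbitrarily long intervals. -/
def IsThick [Add M] (T : Set M) : Prop :=
  ∀ F : Finset M, ∃ y, ∀ z ∈ F, y + z ∈ T

/-- A set is piecewise syndetic if the union of finitely many of its translates is thick. The
translates `B - t` are written as preimages since `M` need not have subtraction. -/
def IsPiecewiseSyndetic [Add M] (B : Set M) : Prop :=
  ∃ R : Finset M, IsThick {m | ∃ t ∈ R, m + t ∈ B}

theorem IsThick.mono [Add M] {S T : Set M} (hS : IsThick S) (hST : S ⊆ T) : IsThick T := fun F ↦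
  (hS F).imp fun _ hy z hz ↦ hST (hy z hz)

theorem IsThick.nonempty [Add M] [Nonempty M] {T : Set M} (hT : IsThick T) : T.Nonempty := by
  obtain ⟨z⟩ := ‹Nonempty M›
  obtain ⟨y, hy⟩ := hT {z}
  exact ⟨y + z, hy z (Finset.mem_singleton_self z)⟩

theorem isThick_Ioi [AddCommMonoid M] [Preorder M] [CanonicallyOrderedAdd M] [NoMaxOrder M]
    (a : M) : IsThick (Set.Ioi a) := fun _ ↦
  (exists_gt a).imp fun _ hy _ _ ↦ hy.trans_le le_self_add

namespace IsPiecewiseSyndetic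

theorem mono [Add M] {B C : Set M} (hB : IsPiecewiseSyndetic B) (hBC : B ⊆ C) :
    IsPiecewiseSyndetic C :=
  hB.imp fun _ hR ↦ hR.mono fun _ ⟨t, ht, hm⟩ ↦ ⟨t, ht, hBC hm⟩

theorem nonempty [Add M] [Nonempty M] {B : Set M} (hB : IsPiecewiseSyndetic B) : B.Nonempty := by
  obtain ⟨R, hR⟩ := hB
  obtain ⟨m, t, -, hm⟩ := hR.nonempty
  exact ⟨m + t, hm⟩

theorem of_exists_add_mem [AddSemigroup M] {B : Set M} {R : Finset M}
    (h : IsPiecewiseSyndetic {m | ∃ t ∈ R, m + t ∈ B}) : IsPiecewiseSyndetic B := by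
  classical
  obtain ⟨R', hR'⟩ := h
  refine ⟨R' + R, hR'.mono ?_⟩
  rintro m ⟨t', ht', t, ht, hm⟩
  exact ⟨t' + t, Finset.add_mem_add ht' ht, by rwa [← add_assoc]⟩

end IsPiecewiseSyndetic

theorem IsThick.diff [AddSemigroup M] {T B : Set M} (hT : IsThick T)
    (hB : ¬ IsPiecewiseSyndetic B) : IsThick (T \ B) := by
  classical
  intro F
  obtain ⟨F', hF'⟩ : ∃ F' : Finset M, ∀ y, ∃ z ∈ F', ∀ t ∈ F, y + z + t ∉ B := by
    simpa [IsPiecewiseSyndetic, IsThick] using not_exists.1 hB F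
  obtain ⟨y, hy⟩ := hT (F' + F)
  obtain ⟨z, hz, hzB⟩ := hF' y
  refine ⟨y + z, fun t ht ↦ ⟨?_, hzB t ht⟩⟩
  rw [add_assoc]
  exact hy _ (Finset.add_mem_add hz ht)

namespace IsPiecewiseSyndetic

theorem of_union [AddSemigroup M] {B C : Set M} (h : IsPiecewiseSyndetic (B ∪ C)) :
    IsPiecewiseSyndetic B ∨ IsPiecewiseSyndetic C := by
  refine or_iff_not_imp_left.2 fun hB ↦ ?_
  obtain ⟨R, hR⟩ := h
  refine ⟨R, (hR.diff (mt (of_exists_add_mem (R := R)) hB)).mono ?_⟩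
  rintro m ⟨⟨t, ht, hm⟩, hmB⟩
  exact ⟨t, ht, hm.resolve_left fun hB ↦ hmB ⟨t, ht, hB⟩⟩

theorem exists_of_sUnion [AddSemigroup M] [Nonempty M] {s : Set (Set M)} (hs : s.Finite)
    (h : IsPiecewiseSyndetic (⋃₀ s)) : ∃ B ∈ s, IsPiecewiseSyndetic B := by
  induction s, hs using Set.Finite.induction_on with
  | empty => exact absurd h.nonempty (by simp)
  | @insert B s _ _ ih =>
    rw [Set.sUnion_insert] at h
    rcases h.of_union with hB | hs
    · exact ⟨B, Set.mem_insert B s, hB⟩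
    · obtain ⟨C, hC, hCps⟩ := ih hs
      exact ⟨C, Set.mem_insert_of_mem B hC, hCps⟩

end IsPiecewiseSyndetic

end Thick

section FiniteSums

variable {M : Type*}

theorem add_mem_of_mem_FS_drop [AddCommSemigroup M] {T : Set M} {x : Stream' M} {S : ℕ → Set M}
    (hT : ∀ n, ∀ s ∈ S n, x.get n + s ∈ T) (hS : ∀ n, S n ⊆ S (n + 1))
    (hxS : ∀ n, ∀ s ∈ S n, x.get n + s ∈ S (n + 1)) {n : ℕ} {m s : M}
    (hm : m ∈ FS (x.drop n)) (hs : s ∈ S n) : m + s ∈ T := by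
  generalize ha : x.drop n = a at hm
  induction hm generalizing n s with subst ha
  | head' => simpa using hT n s hs
  | tail' _ _ _ ih => exact ih (hS n hs) (Stream'.tail_drop').symm
  | cons' _ m _ ih =>
    rw [Stream'.head_drop, add_comm _ m, add_assoc]
    exact ih (hxS n s hs) (Stream'.tail_drop').symm

theorem IsThick.exists_FS_subset [AddCommMonoid M] {T : Set M} (hT : IsThick T) :
    ∃ x : Stream' M, FS x ⊆ T := by
  classical
  choose f hf using hT
  -- `S n` will consist of `0` and all sums of terms before the `n`-th one.
  let S : ℕ → Finset M := fun n ↦ n.rec {0} fun _ F ↦ F ∪ F.image (f F + ·)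
  have zero_mem : (0 : M) ∈ S 0 := Finset.mem_singleton_self 0
  have S_subset (n : ℕ) : S n ⊆ S (n + 1) := Finset.subset_union_left
  have add_mem_S (n : ℕ) (s : M) (hs : s ∈ S n) : f (S n) + s ∈ S (n + 1) :=
    Finset.mem_union_right _ (Finset.mem_image_of_mem _ hs)
  let x : Stream' M := fun n ↦ f (S n)
  refine ⟨x, fun m hm ↦ ?_⟩
  rw [← add_zero m]
  exact add_mem_of_mem_FS_drop (x := x) (S := fun n ↦ SetLike.coe (S n)) (n := 0)
    (fun n ↦ hf (S n)) S_subset add_mem_S hm zero_mem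

theorem IsThick.exists_isPiecewiseSyndetic_FS_subset [AddCommMonoid M] {T : Set M}
    (hT : IsThick T) {s : Set (Set M)} (hs : s.Finite) (hTs : T ⊆ ⋃₀ s) :
    ∃ A ∈ s, IsPiecewiseSyndetic A ∧ ∃ x : Stream' M, FS x ⊆ A := by
  have hbad : ¬ IsPiecewiseSyndetic (⋃₀ {A ∈ s | ¬ IsPiecewiseSyndetic A}) := fun h ↦
    let ⟨_, hA, hAps⟩ := h.exists_of_sUnion (hs.sep _)
    hA.2 hAps
  obtain ⟨x, hx⟩ := (hT.diff hbad).exists_FS_subset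
  have hcover : FS x ⊆ ⋃₀ {A ∈ s | IsPiecewiseSyndetic A} := by
    intro m hm
    obtain ⟨hmT, hm_bad⟩ := hx hm
    obtain ⟨A, hA, hmA⟩ := hTs hmT
    exact ⟨A, ⟨hA, by_contra fun hAps ↦ hm_bad ⟨A, ⟨hA, hAps⟩, hmA⟩⟩, hmA⟩
  obtain ⟨A, ⟨hA, hAps⟩, hxA⟩ := FS_partition_regular x _ (hs.sep _) hcover
  exact ⟨A, hA, hAps, hxA⟩

end FiniteSums

section Progressions

variable {M : Type*} [AddCommMonoid M]

theorem sum_line_apply_nsmul {α ι : Type*} [Fintype ι] (l : Line α ι) (f : α → ℕ) (u : ι → M)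
    (a : α) :
    ∑ i, f (l a i) • u i =
      ∑ i, (l.idxFun i).elim 0 f • u i + f a • ∑ i with l.idxFun i = none, u i := by
  rw [Finset.sum_filter, Finset.smul_sum, ← Finset.sum_add_distrib]
  refine Finset.sum_congr rfl fun i _ ↦ ?_
  cases hi : l.idxFun i <;> simp [hi]

theorem sum_get_mem_FS {ι : Type*} (x : Stream' M) (e : ι ↪ ℕ) {s : Finset ι}
    (hs : s.Nonempty) : ∑ i ∈ s, x.get (e i) ∈ FS x := by
  simpa using FS.finsetSum x (s.map e) (hs.map)

theorem exists_finset_mono_progression (x : Stream' M) (m : ℕ) (κ : Type*) [Finite κ] :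
    ∃ E D : Finset M, ↑D ⊆ FS x ∧ ∀ A : κ → Set M, ↑E ⊆ ⋃ t, A t →
      ∃ t, ∃ d ∈ D, ∃ w, ∀ j ≤ m, w + j • d ∈ ↑E ∩ A t := by
  classical
  obtain ⟨ι, _, hι⟩ := Line.exists_mono_in_high_dimension (Fin (m + 1)) κ
  let u (i : ι) : M := x.get (Fintype.equivFin ι i)
  let point (v : ι → Fin (m + 1)) : M := ∑ i, (v i : ℕ) • u i
  let D : Finset M := ({s | s.Nonempty} : Finset (Finset ι)).image fun s ↦ ∑ i ∈ s, u i
  refine ⟨Finset.univ.image point, D, fun d hd ↦ ?_, fun A hA ↦ ?_⟩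
  · obtain ⟨s, hs, rfl⟩ := Finset.mem_image.1 hd
    exact sum_get_mem_FS x ((Fintype.equivFin ι).toEmbedding.trans Fin.valEmbedding)
      (Finset.mem_filter.1 hs).2
  · have point_mem (v) : point v ∈ Finset.univ.image point :=
      Finset.mem_image_of_mem point (Finset.mem_univ v)
    choose color hcolor using fun v ↦ Set.mem_iUnion.1 (hA (point_mem v))
    obtain ⟨l, t, hl⟩ := hι color
    obtain ⟨i, hi⟩ := l.proper
    refine ⟨t, ∑ i with l.idxFun i = none, u i,
      Finset.mem_image_of_mem _ (by simpa using ⟨i, by simpa using hi⟩),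
      ∑ i, (l.idxFun i).elim 0 Fin.val • u i, fun j hj ↦ ?_⟩
    let a : Fin (m + 1) := ⟨j, Nat.lt_succ_of_le hj⟩
    rw [← sum_line_apply_nsmul l Fin.val u a]
    exact ⟨point_mem (l a), hl a ▸ hcolor (l a)⟩

theorem IsPiecewiseSyndetic.exists_mem_FS_progression {B : Set M} (hB : IsPiecewiseSyndetic B)
    (x : Stream' M) (m : ℕ) :
    ∃ d ∈ FS x, IsPiecewiseSyndetic {b | ∀ j ≤ m, b + j • d ∈ B} := by
  classical
  obtain ⟨R, hR⟩ := hB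
  obtain ⟨E, D, hD, hED⟩ := exists_finset_mono_progression x m R
  let base (d : M) : Set M := {b | ∀ j ≤ m, b + j • d ∈ B}
  have hbase : IsPiecewiseSyndetic (⋃₀ (base '' D)) := by
    refine ⟨E + R, fun F ↦ ?_⟩
    obtain ⟨y, hy⟩ := hR (F + E)
    refine ⟨y, fun z hz ↦ ?_⟩
    obtain ⟨t, d, hd, w, hw⟩ := hED (fun t ↦ {w | y + (z + w) + t ∈ B}) fun w hwE ↦ by
      obtain ⟨t, ht, hmem⟩ := hy _ (Finset.add_mem_add hz hwE)
      exact Set.mem_iUnion.2 ⟨⟨t, ht⟩, hmem⟩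
    have hwE : w ∈ E := by simpa using (hw 0 m.zero_le).1
    refine ⟨w + t, Finset.add_mem_add hwE t.2, base d, ⟨d, hd, rfl⟩, fun j hj ↦ ?_⟩
    have hmem : y + (z + (w + j • d)) + t ∈ B := (hw j hj).2
    convert hmem using 1
    abel
  obtain ⟨_, ⟨d, hd, rfl⟩, hps⟩ := hbase.exists_of_sUnion (D.finite_toSet.image base)
  exact ⟨d, hD hd, hps⟩

/-- The base points of the boxes in `A` with directions `d i` and side lengths `ℓ i` for `i ∈ F`.
The bounds `j i ≤ ℓ i` are inclusive, so `ℓ i` is `kᵢ - 1` in the notation of the paper. -/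
def boxBases {ι : Type*} (A : Set M) (ℓ : ι → ℕ) (d : ι → M) (F : Finset ι) : Set M :=
  {b | ∀ j : ι → ℕ, (∀ i ∈ F, j i ≤ ℓ i) → b + ∑ i ∈ F, j i • d i ∈ A}

theorem boxBases_subset {ι : Type*} (A : Set M) (ℓ : ι → ℕ) (d : ι → M) (F : Finset ι) :
    boxBases A ℓ d F ⊆ A := fun b hb ↦ by
  simpa using hb 0 fun _ _ ↦ Nat.zero_le _

theorem boxBases_antitone {ι : Type*} (A : Set M) (ℓ : ι → ℕ) (d : ι → M) :
    Antitone (boxBases A ℓ d) := by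
  classical
  intro F G hFG b hb j hj
  have hbound (i : ι) (_ : i ∈ G) : (if i ∈ F then j i else 0) ≤ ℓ i := by
    split_ifs with hi
    exacts [hj i hi, Nat.zero_le _]
  simpa [ite_smul, Finset.sum_ite_mem, Finset.inter_eq_right.2 hFG] using hb _ hbound

theorem mem_boxBases_insert {ι : Type*} [DecidableEq ι] {A : Set M} {ℓ : ι → ℕ} {d : ι → M}
    {F : Finset ι} {i : ι} (hi : i ∉ F) {b : M}
    (hb : ∀ j ≤ ℓ i, b + j • d i ∈ boxBases A ℓ d F) : b ∈ boxBases A ℓ d (insert i F) := by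
  intro j hj
  rw [Finset.sum_insert hi, ← add_assoc]
  exact hb (j i) (hj i (Finset.mem_insert_self i F)) j fun i' hi' ↦
    hj i' (Finset.mem_insert_of_mem hi')

theorem IsPiecewiseSyndetic.exists_boxBases {A : Set M} (hA : IsPiecewiseSyndetic A)
    (x : Stream' M) (ℓ : ℕ → ℕ) :
    ∃ d : ℕ → M, (∀ i, d i ∈ FS x) ∧ ∀ F, IsPiecewiseSyndetic (boxBases A ℓ d F) := by
  choose! dir hdir_mem hdir using fun (B : Set M) (m : ℕ) (hB : IsPiecewiseSyndetic B) ↦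
    hB.exists_mem_FS_progression x m
  let bases (n : ℕ) : Set M :=
    n.rec A fun n B ↦ {b | ∀ j ≤ ℓ n, b + j • dir B (ℓ n) ∈ B}
  let d (n : ℕ) : M := dir (bases n) (ℓ n)
  have hbases (n : ℕ) : IsPiecewiseSyndetic (bases n) := by
    induction n with
    | zero => exact hA
    | succ n ih => exact hdir _ _ ih
  have bases_subset (n : ℕ) : bases n ⊆ boxBases A ℓ d (Finset.range n) := by
    induction n with
    | zero => exact fun b (hb : b ∈ A) j _ ↦ by simpa using hb
    | succ n ih =>
      rw [Finset.range_add_one]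
      exact fun b hb ↦ mem_boxBases_insert Finset.notMem_range_self fun j hj ↦ ih (hb j hj)
  refine ⟨d, fun n ↦ hdir_mem _ _ (hbases n), fun F ↦ ?_⟩
  obtain ⟨n, hF⟩ := F.exists_nat_subset_range
  exact (hbases n).mono ((bases_subset n).trans (boxBases_antitone A ℓ d hF))

end Progressions

theorem infinitary_brauer_schur_general {M κ : Type*} [AddCommMonoid M] {T : Set M}
    (hT : IsThick T) (χ : M → κ) (hχ : (χ '' T).Finite) (ℓ : ℕ → ℕ) :
    ∃ (d : ℕ → M) (γ : κ), (∀ i, d i ∈ T ∧ χ (d i) = γ) ∧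
      ∀ F : Finset ℕ, ∃ a ∈ T, ∀ j : ℕ → ℕ, (∀ i ∈ F, j i ≤ ℓ i) →
        a + ∑ i ∈ F, j i • d i ∈ T ∧ χ (a + ∑ i ∈ F, j i • d i) = γ := by
  let colorClass (γ : κ) : Set M := {m ∈ T | χ m = γ}
  have hcover : T ⊆ ⋃₀ (colorClass '' (χ '' T)) := fun m hm ↦
    ⟨colorClass (χ m), Set.mem_image_of_mem _ (Set.mem_image_of_mem χ hm), hm, rfl⟩
  obtain ⟨_, ⟨γ, -, rfl⟩, hγ, x, hx⟩ :=
    hT.exists_isPiecewiseSyndetic_FS_subset (hχ.image colorClass) hcover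
  obtain ⟨d, hdx, hd⟩ := hγ.exists_boxBases x ℓ
  refine ⟨d, γ, fun i ↦ hx (hdx i), fun F ↦ ?_⟩
  obtain ⟨a, ha⟩ := (hd F).nonempty
  exact ⟨a, (boxBases_subset _ ℓ d F ha).1, ha⟩

/-- **Infinitary Brauer–Schur theorem.**
Let `2 ≤ k₁ ≤ k₂ ≤ ⋯` be a nondecreasing sequence of positive integers. Then for any
finite coloring `χ` of the positive integers (with colors `{1,…,c}`) there exist positive
integers `d₁, d₂, …` and a color `γ` such that for every `n ≥ 1` there exists a positive
integer `aₙ` such that the set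
`{aₙ + j₁d₁ + ⋯ + jₙdₙ | 0 ≤ jᵢ ≤ kᵢ − 1}` as well as `{d₁, d₂, …}`
are monochromatic with the color `γ`. -/
theorem infinitary_brauer_schur
    (k : ℕ → ℕ) (hk2 : 2 ≤ k 1) (hkmono : ∀ i, 1 ≤ i → k i ≤ k (i + 1))
    (c : ℕ) (hc : 1 ≤ c)
    (χ : ℕ → ℕ) (hχ : ∀ m, 1 ≤ m → χ m ∈ Finset.Icc 1 c) :
    ∃ (d : ℕ → ℕ) (γ : ℕ), γ ∈ Finset.Icc 1 c ∧
      (∀ i, 1 ≤ i → 0 < d i) ∧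
      (∀ i, 1 ≤ i → χ (d i) = γ) ∧
      (∀ n, 1 ≤ n → ∃ a : ℕ, 0 < a ∧
        ∀ x : ℕ → ℕ, (∀ i, 1 ≤ i → i ≤ n → x i ≤ k i - 1) →
          χ (a + ∑ i ∈ Finset.Icc 1 n, x i * d i) = γ) := by
  obtain ⟨d, γ, hd, hbox⟩ := infinitary_brauer_schur_general (isThick_Ioi 0) χ
    ((Finset.Icc 1 c).finite_toSet.subset (Set.image_subset_iff.2 hχ)) fun i ↦ k i - 1
  refine ⟨d, γ, (hd 1).2 ▸ hχ _ (hd 1).1, fun i _ ↦ (hd i).1, fun i _ ↦ (hd i).2, fun n _ ↦ ?_⟩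
  obtain ⟨a, ha, hχa⟩ := hbox (Finset.Icc 1 n)
  exact ⟨a, ha, fun x hx ↦ (hχa x fun i hi ↦
    hx i (Finset.mem_Icc.1 hi).1 (Finset.mem_Icc.1 hi).2).2⟩
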